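/- Let Q > 0, τ > 0, V > 0, w > 0, H > 0, N₀ > 0, p_max > 0 and α > 0. Define D_r(p) = α·w·τ·log(1 + H·p/(α·N₀·w))/log 2 for p ≥ 0. Then p* = min{ α·w·max{ Q·τ/(V·log 2) − N₀/H, 0 }, p_max } is a minimizer over [0, p_max] of the function p ↦ −Q·D_r(p) + V·p. -/

import Mathlib

/-! With `n = α w N₀ / H` and `A = Q α w τ / log 2`, the objective is
`f p = -A log ((n + p) / n) + V p`, a convex function whose stationary point is `s = A / V - n`,
and `pstar` is the projection of `s` onto `[0, pmax]`. The tangent-line bound `log x ≤ x - 1` at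
`x = (n + p) / (n + pstar)` gives
`f p - f pstar ≥ (p - pstar) (V - A / (n + pstar)) = V (p - pstar) (pstar - s) / (n + pstar)`,
which is nonnegative by the variational inequality of the projection. -/

/-- The variational inequality characterizing the projection of `s` onto `[0, b]`. -/
lemma proj_variational {s b p : ℝ} (hp : p ∈ Set.Icc 0 b) :
    0 ≤ (p - min (max s 0) b) * (min (max s 0) b - s) := by
  obtain ⟨h0, hb⟩ := hp
  rcases le_total s 0 with hs | hs
  · rw [max_eq_right hs, min_eq_left (h0.trans hb)]
    exact mul_nonneg (by linarith) (by linarith)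
  · rw [max_eq_left hs]
    rcases le_total s b with h | h
    · simp [min_eq_left h]
    · rw [min_eq_right h]
      exact mul_nonneg_of_nonpos_of_nonpos (by linarith) (by linarith)

/-- The tangent-line bound for the convex objective `-A log ((n + p) / n) + V p`: a point `q`
satisfying the first-order variational inequality at `p` does at least as well as `p`. -/
lemma objective_le_of_variational {A V n p q : ℝ} (hA : 0 ≤ A) (hn : 0 < n)
    (hp : 0 ≤ p) (hq : 0 ≤ q) (h : 0 ≤ (p - q) * (V * (n + q) - A)) :
    -A * Real.log ((n + q) / n) + V * q ≤ -A * Real.log ((n + p) / n) + V * p := by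
  have hnq : 0 < n + q := by linarith
  have hnp : 0 < n + p := by linarith
  have hlog := Real.log_le_sub_one_of_pos (div_pos hnp hnq)
  rw [Real.log_div hnp.ne' hnq.ne'] at hlog
  rw [Real.log_div hnp.ne' hn.ne', Real.log_div hnq.ne' hn.ne']
  have h1 := mul_le_mul_of_nonneg_left hlog hA
  have h2 := div_nonneg h hnq.le
  have h3 : (p - q) * (V * (n + q) - A) / (n + q)
      = V * (p - q) - A * ((n + p) / (n + q) - 1) := by
    field_simp
    ring
  linarith

/-- Closed-form optimal transmit power for problem P_PWR:
`p* = min (α w max (Q τ / (V log 2) - N₀ / H) 0) p_max` minimizes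
`p ↦ -Q · D_r(p) + V p` over `[0, p_max]`, where
`D_r(p) = α w τ log(1 + H p / (α N₀ w)) / log 2`. -/
theorem optimal_transmit_power (Q τ V w H N₀ pmax α : ℝ)
    (hQ : Q > 0) (hτ : τ > 0) (hV : V > 0) (hw : w > 0) (hH : H > 0)
    (hN₀ : N₀ > 0) (hp : pmax > 0) (hα : α > 0) :
    let Dr : ℝ → ℝ := fun p => α * w * τ * Real.log (1 + H * p / (α * N₀ * w)) / Real.log 2
    let pstar := min (α * w * max (Q * τ / (V * Real.log 2) - N₀ / H) 0) pmax
    pstar ∈ Set.Icc (0 : ℝ) pmax ∧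
      ∀ p ∈ Set.Icc (0 : ℝ) pmax, -Q * Dr pstar + V * pstar ≤ -Q * Dr p + V * p := by
  intro Dr pstar
  have hL : 0 < Real.log 2 := Real.log_pos one_lt_two
  have hc : 0 < α * w := mul_pos hα hw
  have hstar0 : 0 ≤ pstar := le_min (mul_nonneg hc.le (le_max_right _ _)) hp.le
  refine ⟨⟨hstar0, min_le_right _ _⟩, fun p hpI => ?_⟩
  set n := α * w * N₀ / H with hn_def
  set A := Q * (α * w) * τ / Real.log 2 with hA_def
  have hn : 0 < n := by positivity
  have hA : 0 < A := by positivity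
  have hobj (x : ℝ) : -Q * Dr x = -A * Real.log ((n + x) / n) := by
    have hx : 1 + H * x / (α * N₀ * w) = (n + x) / n := by
      rw [hn_def]
      field_simp
    simp only [Dr, hx, hA_def]
    ring
  have hproj : pstar = min (max (A / V - n) 0) pmax := by
    simp only [pstar, mul_max_of_nonneg _ _ hc.le, mul_zero]
    congr 2
    rw [hA_def, hn_def]
    field_simp
  have hvar := proj_variational (s := A / V - n) hpI
  rw [← hproj] at hvar
  rw [hobj, hobj]
  refine objective_le_of_variational hA.le hn hpI.1 hstar0 ?_
  have heq : (p - pstar) * (V * (n + pstar) - A)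
      = V * ((p - pstar) * (pstar - (A / V - n))) := by
    field_simp
    ring
  rw [heq]
  exact mul_nonneg hV.le hvar
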